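/- For every instance of interval selection with unit weights, every prediction assignment, and every maximum-cardinality feasible set OPT, the solution produced by algorithm Revoke-Unit satisfies ALG ≥ OPT − η, where η is the total prediction error relative to OPT. -/

import Mathlib

attribute [local instance] Classical.propDecidable

noncomputable section

/-- An interval `I = (s, f)` with `s < f`, occupying `[s, f)`. -/
structure Ivl where
  s : ℝ
  f : ℝ
  lt : s < f

namespace Ivl

/-- The set of points occupied by an interval: the half-open set `[s, f)`. -/
def occ (I : Ivl) : Set ℝ := Set.Ico I.s I.f

/-- The length of an interval, `f - s` (also its proportional weight). -/
def len (I : Ivl) : ℝ := I.f - I.s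

end Ivl

/-- Two intervals conflict if their occupied sets intersect. -/
def Conflict (I J : Ivl) : Prop := (I.occ ∩ J.occ).Nonempty

/-- A set of intervals is feasible if its elements are pairwise disjoint. -/
def Feasible (S : Finset Ivl) : Prop :=
  ∀ I ∈ S, ∀ J ∈ S, I ≠ J → ¬ Conflict I J

/-- `opt` is a maximum-cardinality feasible subset of the instance's intervals. -/
def IsMaxCardOpt (inst : List Ivl) (opt : Finset Ivl) : Prop :=
  (∀ I ∈ opt, I ∈ inst) ∧ Feasible opt ∧
    ∀ T : Finset Ivl, (∀ I ∈ T, I ∈ inst) → Feasible T → T.card ≤ opt.card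

/-- The prediction error introduced by interval `I`, relative to `opt`,
with weight function `w`. -/
def err (w : Ivl → ℝ) (opt : Finset Ivl) (Prd : Ivl → Bool) (I : Ivl) : ℝ :=
  if (Prd I = true ↔ I ∈ opt) then 0
  else if I ∈ opt then w I
  else (∑ J ∈ opt.filter (fun J => Conflict J I), w J) - w I

/-- The total prediction error of the instance relative to `opt`. -/
def totalErr (w : Ivl → ℝ) (opt : Finset Ivl) (Prd : Ivl → Bool)
    (inst : List Ivl) : ℝ :=
  (inst.map (err w opt Prd)).sum

/-- A conflict is partial if neither occupied set contains the other. -/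
def PartialConflict (I J : Ivl) : Prop :=
  Conflict I J ∧ ¬ I.occ ⊆ J.occ ∧ ¬ J.occ ⊆ I.occ

/-- One step of algorithm `Revoke-Unit` on state `(S, M)` (solution, marked)
upon the arrival of `I`. -/
def revokeUnitStep (Prd : Ivl → Bool) (st : Finset Ivl × Finset Ivl)
    (I : Ivl) : Finset Ivl × Finset Ivl :=
  let S := st.1
  let M := st.2
  let Is := S.filter (fun J => Conflict I J)
  if Is = ∅ then
    (insert I S, M)
  else if ∃ I', Is = {I'} ∧ I.occ ⊂ I'.occ then
    (insert I (S \ Is), if Is ∩ M = ∅ then M else insert I M)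
  else if (∀ J ∈ Is, PartialConflict I J) ∧ Prd I = true ∧ Is ∩ M = ∅ then
    (insert I (S \ Is), insert I M)
  else
    st

/-- The solution produced by algorithm `Revoke-Unit` on the instance `inst`
with predictions `Prd`. -/
def revokeUnit (Prd : Ivl → Bool) (inst : List Ivl) : Finset Ivl :=
  (inst.foldl (revokeUnitStep Prd) (∅, ∅)).1

theorem conflict_iff (I J : Ivl) : Conflict I J ↔ I.s < J.f ∧ J.s < I.f := by
  have hI := I.lt
  have hJ := J.lt
  unfold Conflict Ivl.occ
  rw [Set.Ico_inter_Ico, Set.nonempty_Ico]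
  simp only [sup_lt_iff, lt_inf_iff]
  tauto

theorem conflict_symm {I J : Ivl} (h : Conflict I J) : Conflict J I := by
  rw [conflict_iff] at *
  exact ⟨h.2, h.1⟩

theorem conflict_self (I : Ivl) : Conflict I I := by
  rw [conflict_iff]
  exact ⟨I.lt, I.lt⟩

theorem conflict_mono {I I' J : Ivl} (h : I.occ ⊆ I'.occ) (hc : Conflict I J) : Conflict I' J := by
  obtain ⟨x, hx1, hx2⟩ := hc
  exact ⟨x, h hx1, hx2⟩

theorem conflict_of_subset {I J : Ivl} (h : I.occ ⊆ J.occ) : Conflict J I :=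
  conflict_mono h (conflict_self I)

/-- Invariant of the algorithm after the intervals in `P` have arrived. -/
structure RInv (opt : Finset Ivl) (Prd : Ivl → Bool) (P : Set Ivl)
    (S M : Finset Ivl) (r : Ivl → Ivl) : Prop where
  feas : Feasible S
  MP : ∀ m ∈ M, m ∈ P
  root : ∀ m ∈ S, m ∈ M → r m ∈ P ∧ m.occ ⊆ (r m).occ ∧ Prd (r m) = true
  cover : ∀ J ∈ opt, J ∈ P → Prd J = true → (∃ K ∈ S, K.occ ⊆ J.occ) ∨
    ∃ m ∈ S, m ∈ M ∧ r m ∉ opt ∧ Conflict J (r m)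

theorem feas_replace {S : Finset Ivl} (hS : Feasible S) (I : Ivl) :
    Feasible (insert I (S \ S.filter (fun J => Conflict I J))) := by
  intro A hA B hB hne hc
  simp only [Finset.mem_insert, Finset.mem_sdiff, Finset.mem_filter, not_and] at hA hB
  rcases hA with rfl | hA <;> rcases hB with rfl | hB
  · exact hne rfl
  · exact hB.2 hB.1 hc
  · exact hA.2 hA.1 (conflict_symm hc)
  · exact hS A hA.1 B hB.1 hne hc

theorem RInv_step {opt : Finset Ivl} {Prd : Ivl → Bool} {P : Set Ivl}
    {S M : Finset Ivl} {r : Ivl → Ivl} (hopt : Feasible opt)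
    (h : RInv opt Prd P S M r) (I : Ivl) (hI : I ∉ P) :
    ∃ r', RInv opt Prd (insert I P) (revokeUnitStep Prd (S, M) I).1
      (revokeUnitStep Prd (S, M) I).2 r' := by
  have hIM : I ∉ M := fun hm => hI (h.MP I hm)
  have hfr := feas_replace h.feas I
  unfold revokeUnitStep
  dsimp only
  split_ifs with h1 h2 h3 h4
  · -- no conflict
    refine ⟨r, ?_, ?_, ?_, ?_⟩
    · rw [h1, Finset.sdiff_empty] at hfr
      exact hfr
    · exact fun m hm => Or.inr (h.MP m hm)
    · intro m hm hmM
      rcases Finset.mem_insert.1 hm with rfl | hm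
      · exact absurd hmM hIM
      · obtain ⟨a, b⟩ := h.root m hm hmM
        exact ⟨Or.inr a, b⟩
    · intro J hJ hJP hp
      rcases hJP with rfl | hJP
      · exact Or.inl ⟨J, Finset.mem_insert_self _ _, subset_rfl⟩
      · rcases h.cover J hJ hJP hp with ⟨K, hK, hKJ⟩ | ⟨m, hm, hh⟩
        · exact Or.inl ⟨K, Finset.mem_insert_of_mem hK, hKJ⟩
        · exact Or.inr ⟨m, Finset.mem_insert_of_mem hm, hh⟩
  · -- replacement of an unmarked interval
    obtain ⟨I', hIs, hsub⟩ := h2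
    rw [hIs] at hfr h3 ⊢
    have hI'M : I' ∉ M := by
      intro hm
      have : I' ∈ ({I'} : Finset Ivl) ∩ M := by simp [hm]
      rw [h3] at this
      simp at this
    refine ⟨r, hfr, ?_, ?_, ?_⟩
    · exact fun m hm => Or.inr (h.MP m hm)
    · intro m hm hmM
      rcases Finset.mem_insert.1 hm with rfl | hm
      · exact absurd hmM hIM
      · obtain ⟨a, b⟩ := h.root m (Finset.mem_sdiff.1 hm).1 hmM
        exact ⟨Or.inr a, b⟩
    · intro J hJ hJP hp
      rcases hJP with rfl | hJP
      · exact Or.inl ⟨J, Finset.mem_insert_self _ _, subset_rfl⟩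
      · rcases h.cover J hJ hJP hp with ⟨K, hK, hKJ⟩ | ⟨m, hm, hmM, hh⟩
        · left
          by_cases hKI : K = I'
          · subst hKI
            exact ⟨I, Finset.mem_insert_self _ _, hsub.subset.trans hKJ⟩
          · exact ⟨K, by simp [hK, hKI], hKJ⟩
        · right
          have : m ≠ I' := by rintro rfl; exact hI'M hmM
          exact ⟨m, by simp [hm, this], hmM, hh⟩
  · -- replacement of a marked interval
    obtain ⟨I', hIs, hsub⟩ := h2
    have hI'S : I' ∈ S := by
      have : I' ∈ S.filter (fun J => Conflict I J) := by rw [hIs]; simp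
      exact (Finset.mem_filter.1 this).1
    rw [hIs] at hfr h3 ⊢
    have hI'M : I' ∈ M := by
      by_contra hm
      exact h3 (by simp [hm])
    refine ⟨Function.update r I (r I'), hfr, ?_, ?_, ?_⟩
    · intro m hm
      rcases Finset.mem_insert.1 hm with rfl | hm
      · exact Or.inl rfl
      · exact Or.inr (h.MP m hm)
    · intro m hm hmM
      by_cases hmI : m = I
      · subst hmI
        rw [Function.update_self]
        obtain ⟨a, b, c⟩ := h.root I' hI'S hI'M
        exact ⟨Or.inr a, hsub.subset.trans b, c⟩
      · rw [Function.update_of_ne hmI]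
        have hm' := (Finset.mem_sdiff.1 (Finset.mem_of_mem_insert_of_ne hm hmI)).1
        obtain ⟨a, b⟩ := h.root m hm' (Finset.mem_of_mem_insert_of_ne hmM hmI)
        exact ⟨Or.inr a, b⟩
    · intro J hJ hJP hp
      rcases hJP with rfl | hJP
      · exact Or.inl ⟨J, Finset.mem_insert_self _ _, subset_rfl⟩
      · rcases h.cover J hJ hJP hp with ⟨K, hK, hKJ⟩ | ⟨m, hm, hmM, hh⟩
        · left
          by_cases hKI : K = I'
          · subst hKI
            exact ⟨I, Finset.mem_insert_self _ _, hsub.subset.trans hKJ⟩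
          · exact ⟨K, by simp [hK, hKI], hKJ⟩
        · right
          by_cases hmI' : m = I'
          · subst hmI'
            refine ⟨I, Finset.mem_insert_self _ _, Finset.mem_insert_self _ _, ?_⟩
            rw [Function.update_self]
            exact hh
          · have hmI : m ≠ I := by rintro rfl; exact hIM hmM
            refine ⟨m, by simp [hm, hmI'], Finset.mem_insert_of_mem hmM, ?_⟩
            rw [Function.update_of_ne hmI]
            exact hh
  · -- acceptance because of the prediction
    obtain ⟨-, hpI, hM⟩ := h4
    have hnot : ∀ m ∈ S, m ∈ M → ¬ Conflict I m := by
      intro m hm hmM hc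
      have : m ∈ S.filter (fun J => Conflict I J) ∩ M := by simp [hm, hmM, hc]
      rw [hM] at this
      simp at this
    refine ⟨Function.update r I I, hfr, ?_, ?_, ?_⟩
    · intro m hm
      rcases Finset.mem_insert.1 hm with rfl | hm
      · exact Or.inl rfl
      · exact Or.inr (h.MP m hm)
    · intro m hm hmM
      by_cases hmI : m = I
      · subst hmI
        rw [Function.update_self]
        exact ⟨Or.inl rfl, subset_rfl, hpI⟩
      · rw [Function.update_of_ne hmI]
        have hm' := (Finset.mem_sdiff.1 (Finset.mem_of_mem_insert_of_ne hm hmI)).1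
        obtain ⟨a, b⟩ := h.root m hm' (Finset.mem_of_mem_insert_of_ne hmM hmI)
        exact ⟨Or.inr a, b⟩
    · intro J hJ hJP hp
      rcases hJP with rfl | hJP
      · exact Or.inl ⟨J, Finset.mem_insert_self _ _, subset_rfl⟩
      · rcases h.cover J hJ hJP hp with ⟨K, hK, hKJ⟩ | ⟨m, hm, hmM, hh⟩
        · by_cases hc : Conflict I K
          · right
            have hcJ : Conflict J I := conflict_mono hKJ (conflict_symm hc)
            refine ⟨I, Finset.mem_insert_self _ _, Finset.mem_insert_self _ _, ?_⟩
            rw [Function.update_self]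
            refine ⟨fun hIo => ?_, hcJ⟩
            exact hopt J hJ I hIo (by rintro rfl; exact hI hJP) hcJ
          · left
            exact ⟨K, by simp [hK, hc], hKJ⟩
        · right
          have hmI : m ≠ I := by rintro rfl; exact hIM hmM
          refine ⟨m, by simp [hm, hnot m hm hmM], Finset.mem_insert_of_mem hmM, ?_⟩
          rw [Function.update_of_ne hmI]
          exact hh
  · -- rejection
    refine ⟨r, h.feas, fun m hm => Or.inr (h.MP m hm), ?_, ?_⟩
    · intro m hm hmM
      obtain ⟨a, b⟩ := h.root m hm hmM
      exact ⟨Or.inr a, b⟩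
    · intro J hJ hJP hp
      rcases hJP with rfl | hJP
      · by_cases hM : S.filter (fun K => Conflict J K) ∩ M = ∅
        · left
          have h5 : ¬ ∀ K ∈ S.filter (fun K => Conflict J K), PartialConflict J K :=
            fun h5 => h4 ⟨h5, hp, hM⟩
          push Not at h5
          obtain ⟨K, hK, hnp⟩ := h5
          obtain ⟨hKS, hKc⟩ := Finset.mem_filter.1 hK
          by_cases hKJ : K.occ ⊆ J.occ
          · exact ⟨K, hKS, hKJ⟩
          · exfalso
            have hJK : J.occ ⊆ K.occ := by
              by_contra hJK
              exact hnp ⟨hKc, hJK, hKJ⟩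
            refine h2 ⟨K, ?_, hJK, hKJ⟩
            ext L
            simp only [Finset.mem_filter, Finset.mem_singleton]
            constructor
            · rintro ⟨hL, hLc⟩
              by_contra hne
              exact h.feas L hL K hKS hne (conflict_symm (conflict_mono hJK hLc))
            · rintro rfl
              exact ⟨hKS, hKc⟩
        · right
          obtain ⟨m, hm⟩ := Finset.nonempty_iff_ne_empty.2 hM
          obtain ⟨hm1, hmM⟩ := Finset.mem_inter.1 hm
          obtain ⟨hmS, hmc⟩ := Finset.mem_filter.1 hm1
          obtain ⟨a, b, c⟩ := h.root m hmS hmM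
          have hc : Conflict J (r m) := conflict_symm (conflict_mono b (conflict_symm hmc))
          refine ⟨m, hmS, hmM, fun hro => ?_, hc⟩
          refine hopt J hJ (r m) hro ?_ hc
          intro he
          exact hI (he ▸ a)
      · exact h.cover J hJ hJP hp

theorem RInv_final {opt : Finset Ivl} {Prd : Ivl → Bool} (hopt : Feasible opt)
    (inst : List Ivl) (hd : inst.Nodup) :
    ∃ r, RInv opt Prd {I | I ∈ inst} (inst.foldl (revokeUnitStep Prd) (∅, ∅)).1
      (inst.foldl (revokeUnitStep Prd) (∅, ∅)).2 r := by
  induction inst using List.reverseRecOn with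
  | nil =>
    refine ⟨id, ?_, ?_, ?_, ?_⟩
    · intro I hI
      simp at hI
    all_goals simp
  | append_singleton l a ih =>
    rw [List.nodup_append] at hd
    obtain ⟨r, hr⟩ := ih hd.1
    have ha : a ∉ {I | I ∈ l} := fun ha => hd.2.2 a ha a (by simp) rfl
    obtain ⟨r', hr'⟩ := RInv_step hopt hr a ha
    refine ⟨r', ?_⟩
    rw [List.foldl_append]
    have hs : {I | I ∈ l ++ [a]} = insert a {I | I ∈ l} := by
      ext x
      simp [or_comm]
    rw [hs]
    exact hr'

theorem err_nonneg {inst : List Ivl} {opt : Finset Ivl} (hopt : IsMaxCardOpt inst opt)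
    (Prd : Ivl → Bool) (I : Ivl) (hI : I ∈ inst) : 0 ≤ err (fun _ => 1) opt Prd I := by
  unfold err
  split_ifs with h1 h2
  · exact le_rfl
  · exact zero_le_one
  · have : (opt.filter (fun J => Conflict J I)).Nonempty := by
      by_contra hne
      rw [Finset.not_nonempty_iff_eq_empty] at hne
      have hc : ∀ J ∈ opt, ¬ Conflict J I := by
        intro J hJ hc
        have : J ∈ opt.filter (fun J => Conflict J I) := by simp [hJ, hc]
        rw [hne] at this
        simp at this
      have := hopt.2.2 (insert I opt) ?_ ?_
      · rw [Finset.card_insert_of_notMem h2] at this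
        omega
      · intro J hJ
        rcases Finset.mem_insert.1 hJ with rfl | hJ
        · exact hI
        · exact hopt.1 J hJ
      · intro A hA B hB hAne hAB
        rcases Finset.mem_insert.1 hA with hA1 | hA1 <;>
          rcases Finset.mem_insert.1 hB with hB1 | hB1
        · exact hAne (hA1.trans hB1.symm)
        · exact hc B hB1 (conflict_symm (hA1 ▸ hAB))
        · exact hc A hA1 (hB1 ▸ hAB)
        · exact hopt.2.1 A hA1 B hB1 hAne hAB
    have h3 : (1 : ℝ) ≤ ((opt.filter (fun J => Conflict J I)).card : ℝ) := by
      exact_mod_cast this.card_pos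
    simp only [Finset.sum_const, nsmul_eq_mul, mul_one]
    linarith

theorem revokeUnit_performance
    (inst : List Ivl) (hdist : inst.Nodup) (Prd : Ivl → Bool)
    (opt : Finset Ivl) (hopt : IsMaxCardOpt inst opt) :
    ((revokeUnit Prd inst).card : ℝ) ≥
      (opt.card : ℝ) - totalErr (fun _ => 1) opt Prd inst := by
  obtain ⟨r, hr⟩ := RInv_final (Prd := Prd) hopt.2.1 inst hdist
  change RInv opt Prd {I | I ∈ inst} (revokeUnit Prd inst) _ r at hr
  set S := revokeUnit Prd inst
  set M := (inst.foldl (revokeUnitStep Prd) (∅, ∅)).2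
  -- members of the solution with a wrongly predicted root, and these roots
  set Q := S.filter (fun m => m ∈ M ∧ r m ∉ opt) with hQ
  set F := Q.image r with hF
  set FN := opt.filter (fun J => Prd J = false) with hFN
  set B := opt.filter (fun J => ∃ m ∈ Q, Conflict J (r m)) with hB
  set A := opt.filter (fun J => (∃ K ∈ S, K.occ ⊆ J.occ) ∧ J ∉ B) with hA
  have hcov : opt ⊆ FN ∪ (A ∪ B) := by
    intro J hJ
    by_cases hJB : J ∈ B
    · simp [hJB]
    cases hp : Prd J with
    | false => simp [hFN, hJ, hp]
    | true =>
      rcases hr.cover J hJ (hopt.1 J hJ) hp with hK | ⟨m, hm, hmM, hmo, hc⟩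
      · have : J ∈ A := Finset.mem_filter.2 ⟨hJ, hK, hJB⟩
        simp [this]
      · exact absurd (Finset.mem_filter.2 ⟨hJ, m, Finset.mem_filter.2 ⟨hm, hmM, hmo⟩, hc⟩) hJB
  have hcard : opt.card ≤ FN.card + (A.card + B.card) :=
    (Finset.card_le_card hcov).trans ((Finset.card_union_le _ _).trans
      (Nat.add_le_add_left (Finset.card_union_le _ _) _))
  -- the intervals in A are charged to members of S outside Q
  have hAcard : A.card ≤ (S \ Q).card := by
    have hex : ∀ J : Ivl, ∃ K : Ivl, J ∈ A → K ∈ S ∧ K.occ ⊆ J.occ := by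
      intro J
      by_cases hJ : J ∈ A
      · obtain ⟨K, hK⟩ := (Finset.mem_filter.1 hJ).2.1
        exact ⟨K, fun _ => hK⟩
      · exact ⟨J, fun h => absurd h hJ⟩
    choose g hg using hex
    refine Finset.card_le_card_of_injOn g ?_ ?_
    · intro J hJ
      have hJ : J ∈ A := hJ
      obtain ⟨hgS, hgJ⟩ := hg J hJ
      obtain ⟨hJo, -, hJB⟩ := Finset.mem_filter.1 hJ
      refine Finset.mem_coe.2 (Finset.mem_sdiff.2 ⟨hgS, fun hgQ => hJB ?_⟩)
      refine Finset.mem_filter.2 ⟨hJo, g J, hgQ, ?_⟩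
      have hb := (hr.root (g J) hgS (Finset.mem_filter.1 hgQ).2.1).2.1
      exact conflict_symm (conflict_mono hb (conflict_symm (conflict_of_subset hgJ)))
    · intro J hJ J' hJ' he
      have hJ : J ∈ A := hJ
      have hJ' : J' ∈ A := hJ'
      by_contra hne
      refine hopt.2.1 J (Finset.mem_filter.1 hJ).1 J' (Finset.mem_filter.1 hJ').1 hne ?_
      have h1 := (hg J hJ).2
      have h2 := (hg J' hJ').2
      rw [← he] at h2
      exact conflict_mono h1 (conflict_symm (conflict_of_subset h2))
  have hSQ : (S \ Q).card + Q.card = S.card :=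
    Finset.card_sdiff_add_card_eq_card (Finset.filter_subset _ _)
  have hFQ : F.card ≤ Q.card := Finset.card_image_le
  have hFprop : ∀ x ∈ F, x ∈ inst ∧ Prd x = true ∧ x ∉ opt := by
    intro x hx
    obtain ⟨m, hm, rfl⟩ := Finset.mem_image.1 hx
    obtain ⟨hmS, hmM, hmo⟩ := Finset.mem_filter.1 hm
    obtain ⟨a, -, c⟩ := hr.root m hmS hmM
    exact ⟨a, c, hmo⟩
  have hBcard : B.card ≤ ∑ x ∈ F, (opt.filter (fun J => Conflict J x)).card := by
    refine le_trans (Finset.card_le_card ?_) Finset.card_biUnion_le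
    intro J hJ
    obtain ⟨hJo, m, hm, hc⟩ := Finset.mem_filter.1 hJ
    exact Finset.mem_biUnion.2
      ⟨r m, Finset.mem_image_of_mem r hm, Finset.mem_filter.2 ⟨hJo, hc⟩⟩
  have hFerr : ∑ x ∈ F, err (fun _ => 1) opt Prd x =
      ((∑ x ∈ F, (opt.filter (fun J => Conflict J x)).card : ℕ) : ℝ) - F.card := by
    have : ∀ x ∈ F, err (fun _ => 1) opt Prd x =
        ((opt.filter (fun J => Conflict J x)).card : ℝ) - 1 := by
      intro x hx
      obtain ⟨-, h2, h3⟩ := hFprop x hx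
      simp [err, h2, h3]
    rw [Finset.sum_congr rfl this, Finset.sum_sub_distrib]
    simp
  have hFNerr : ∑ x ∈ FN, err (fun _ => 1) opt Prd x = FN.card := by
    have : ∀ x ∈ FN, err (fun _ => 1) opt Prd x = 1 := by
      intro x hx
      obtain ⟨h2, h3⟩ := Finset.mem_filter.1 hx
      simp [err, h2, h3]
    rw [Finset.sum_congr rfl this]
    simp
  have hdisj : Disjoint F FN := by
    rw [Finset.disjoint_left]
    intro x hx hx'
    exact (hFprop x hx).2.2 (Finset.mem_filter.1 hx').1
  have htot : ∑ x ∈ F ∪ FN, err (fun _ => 1) opt Prd x ≤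
      totalErr (fun _ => 1) opt Prd inst := by
    unfold totalErr
    rw [← List.sum_toFinset _ hdist]
    refine Finset.sum_le_sum_of_subset_of_nonneg ?_ ?_
    · intro x hx
      rw [List.mem_toFinset]
      rcases Finset.mem_union.1 hx with hx | hx
      · exact (hFprop x hx).1
      · exact hopt.1 x (Finset.mem_filter.1 hx).1
    · intro x hx _
      exact err_nonneg hopt Prd x (List.mem_toFinset.1 hx)
  rw [Finset.sum_union hdisj, hFerr, hFNerr] at htot
  have e1 : (opt.card : ℝ) ≤ FN.card + (A.card + B.card) := by exact_mod_cast hcard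
  have e2 : (A.card : ℝ) ≤ (S \ Q).card := by exact_mod_cast hAcard
  have e3 : ((S \ Q).card : ℝ) + Q.card = S.card := by exact_mod_cast hSQ
  have e4 : (F.card : ℝ) ≤ Q.card := by exact_mod_cast hFQ
  have e5 : (B.card : ℝ) ≤ ((∑ x ∈ F, (opt.filter (fun J => Conflict J x)).card : ℕ) : ℝ) := by
    exact_mod_cast hBcard
  linarith
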